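/- arXiv:1907.13438 — 2 statements merged into one kernel-verified Lean document; each statement's English description precedes it below -/
import Mathlib

section
/- Let n ≥ 1 and let c : {1,…,n}² → ℝ satisfy c_{ij} ≥ 0 for all i,j and c_{ii} = 0 for all i. Then ⋃_{β ∈ S⁺_{ℝⁿ}} {∑_{i,j=1}^n s_{ij} : s_{ij} ∈ ℍ, |s_{ij}| = βᵢβⱼ c_{ij} for all i,j} = 𝔻_ℍ(0, max_{β ∈ S⁺_{ℝⁿ}} ∑_{i,j=1}^n βᵢβⱼ c_{ij}). -/
/-!
The coordinatewise square root maps the standard simplex onto `S⁺`, so `S⁺` is connected. On it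
`β ↦ ∑ᵢⱼ βᵢβⱼcᵢⱼ` takes the value `cₖₖ = 0` at a basis vector, hence every value in `[0, M]`. If
`‖q‖` is such a value, then `q` is a sum of vectors of the prescribed norms, all of them nonnegative
multiples of `q`. The other inclusion is the triangle inequality.
-/

section NonnegSphere

variable {ι : Type*} [Fintype ι]

variable (ι) in
/-- The part `S⁺` of the Euclidean unit sphere lying in the nonnegative orthant. It is a set of
plain functions, so its topology is the product topology. -/
def nonnegSphere : Set (ι → ℝ) :=
  {β | (∀ i, 0 ≤ β i) ∧ ∑ i, β i ^ 2 = 1}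

/-- The quadratic form `β ↦ ∑ᵢⱼ βᵢβⱼcᵢⱼ` with coefficients `c`, not necessarily symmetric; its
maximum on `nonnegSphere ι` is the radius of the disk. -/
def coeffForm (c : ι → ι → ℝ) (β : ι → ℝ) : ℝ :=
  ∑ i, ∑ j, β i * β j * c i j

theorem image_sqrt_stdSimplex :
    (fun (w : ι → ℝ) i => √(w i)) '' stdSimplex ℝ ι = nonnegSphere ι := by
  ext β
  constructor
  · rintro ⟨w, ⟨hw_nonneg, hw_sum⟩, rfl⟩
    exact ⟨fun i => Real.sqrt_nonneg _, by simpa only [Real.sq_sqrt (hw_nonneg _)] using hw_sum⟩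
  · rintro ⟨hβ_nonneg, hβ_sum⟩
    exact ⟨fun i => β i ^ 2, ⟨fun i => sq_nonneg _, hβ_sum⟩,
      funext fun i => Real.sqrt_sq (hβ_nonneg i)⟩

theorem isPreconnected_nonnegSphere : IsPreconnected (nonnegSphere ι) := by
  rw [← image_sqrt_stdSimplex]
  exact (convex_stdSimplex ℝ ι).isPreconnected.image _ (by fun_prop)

theorem single_one_mem_nonnegSphere [DecidableEq ι] (k : ι) :
    Pi.single k 1 ∈ nonnegSphere ι :=
  ⟨(single_mem_stdSimplex ℝ k).1, by simp [Pi.single_apply]⟩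

theorem coeffForm_single_one [DecidableEq ι] (c : ι → ι → ℝ) (k : ι) :
    coeffForm c (Pi.single k 1) = c k k := by
  simp [coeffForm, Pi.single_apply]

theorem continuous_coeffForm (c : ι → ι → ℝ) : Continuous (coeffForm c) := by
  unfold coeffForm
  fun_prop

theorem Icc_diag_subset_coeffForm_image (c : ι → ι → ℝ) (k : ι) {β : ι → ℝ}
    (hβ : β ∈ nonnegSphere ι) :
    Set.Icc (c k k) (coeffForm c β) ⊆ coeffForm c '' nonnegSphere ι := by
  classical
  rw [← coeffForm_single_one c k]
  exact isPreconnected_nonnegSphere.intermediate_value (single_one_mem_nonnegSphere k) hβ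
    (continuous_coeffForm c).continuousOn

end NonnegSphere

section NormedSpace

variable {ι E : Type*} [Fintype ι] [NormedAddCommGroup E] [NormedSpace ℝ E]

theorem exists_norm_eq_and_sum_eq {a : ι → ℝ} (ha : ∀ i, 0 ≤ a i) {q : E}
    (hq : ∑ i, a i = ‖q‖) : ∃ s : ι → E, (∀ i, ‖s i‖ = a i) ∧ ∑ i, s i = q := by
  have eq_zero (h : ‖q‖ = 0) (i : ι) : a i = 0 :=
    (Finset.sum_eq_zero_iff_of_nonneg fun i _ => ha i).mp (hq.trans h) i (Finset.mem_univ i)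
  refine ⟨fun i => (a i / ‖q‖) • q, fun i => ?_, ?_⟩
  · rw [norm_smul_of_nonneg (div_nonneg (ha i) (norm_nonneg q)),
      div_mul_cancel_of_imp fun h => eq_zero h i]
  · rcases eq_or_ne q 0 with rfl | hq_ne
    · simp only [smul_zero, Finset.sum_const_zero]
    · rw [← Finset.sum_smul, ← Finset.sum_div, hq, div_self (norm_ne_zero_iff.mpr hq_ne), one_smul]

theorem union_sphere_sums_eq_disk_general {c : ι → ι → ℝ} (hc : ∀ i j, 0 ≤ c i j)
    {k : ι} (hk : c k k = 0) {M : ℝ} (hM : IsGreatest (coeffForm c '' nonnegSphere ι) M) :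
    {q : E | ∃ β ∈ nonnegSphere ι, ∃ s : ι → ι → E,
        (∀ i j, ‖s i j‖ = β i * β j * c i j) ∧ q = ∑ i, ∑ j, s i j}
      = Metric.closedBall 0 M := by
  ext q
  rw [Set.mem_ofPred_eq, mem_closedBall_zero_iff]
  constructor
  · rintro ⟨β, hβ, s, hs, rfl⟩
    calc ‖∑ i, ∑ j, s i j‖ ≤ coeffForm c β :=
          norm_sum_le_of_le _ fun i _ => norm_sum_le_of_le _ fun j _ => (hs i j).le
      _ ≤ M := hM.2 (Set.mem_image_of_mem _ hβ)
  · intro hqM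
    obtain ⟨b, hb, rfl⟩ := hM.1
    obtain ⟨β, hβ, hβq⟩ : ‖q‖ ∈ coeffForm c '' nonnegSphere ι :=
      Icc_diag_subset_coeffForm_image c k hb ⟨hk.trans_le (norm_nonneg q), hqM⟩
    obtain ⟨s, hs, hsq⟩ :=
      exists_norm_eq_and_sum_eq (a := fun p : ι × ι => β p.1 * β p.2 * c p.1 p.2)
        (fun p => mul_nonneg (mul_nonneg (hβ.1 p.1) (hβ.1 p.2)) (hc p.1 p.2))
        ((Fintype.sum_prod_type _).trans hβq)
    exact ⟨β, hβ, fun i j => s (i, j), fun i j => hs (i, j),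
      hsq.symm.trans (Fintype.sum_prod_type s)⟩

end NormedSpace

/-- For nonnegative weights `c` vanishing on the diagonal, the union over
`β ∈ S⁺_{ℝⁿ}` of the Minkowski sums of spheres `𝕊_ℍ(0, βᵢβⱼcᵢⱼ)` is the closed disk
centered at the origin of radius `max_{β ∈ S⁺_{ℝⁿ}} ∑ᵢⱼ βᵢβⱼcᵢⱼ`. -/
theorem union_sphere_sums_eq_disk {n : ℕ} (hn : 1 ≤ n) (c : Fin n → Fin n → ℝ)
    (hc : ∀ i j, 0 ≤ c i j) (hcd : ∀ i, c i i = 0)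
    (M : ℝ)
    (hM : IsGreatest {t | ∃ β : Fin n → ℝ, (∀ i, 0 ≤ β i) ∧ (∑ i, β i ^ 2) = 1 ∧
        t = ∑ i, ∑ j, β i * β j * c i j} M) :
    {q : Quaternion ℝ | ∃ β : Fin n → ℝ, (∀ i, 0 ≤ β i) ∧ (∑ i, β i ^ 2) = 1 ∧
        ∃ s : Fin n → Fin n → Quaternion ℝ,
          (∀ i j, ‖s i j‖ = β i * β j * c i j) ∧ q = ∑ i, ∑ j, s i j}
      = Metric.closedBall (0 : Quaternion ℝ) M := by
  have hM' : IsGreatest (coeffForm c '' nonnegSphere (Fin n)) M := by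
    simpa only [Set.image, nonnegSphere, coeffForm, Set.mem_ofPred_eq, and_assoc, eq_comm] using hM
  simpa only [nonnegSphere, Set.mem_ofPred_eq, and_assoc] using
    union_sphere_sums_eq_disk_general (E := Quaternion ℝ) hc (hcd ⟨0, hn⟩) hM'
end

section
/- Let q₁₂, q₁₃ ∈ ℍ be nonzero, let k = |q₁₂|² + |q₁₃|², and let à ∈ M₃(ℍ) be the matrix with rows (0, q₁₂, q₁₃), (0, 1, 0), (0, 0, 1). Then W(Ã) = ⋃_{d ∈ [0,1]} 𝔻_ℍ(d, √(k d(1−d))). -/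
/-- The quaternionic numerical range of a square quaternionic matrix. -/
def qnr {ι : Type*} [Fintype ι] (A : Matrix ι ι (Quaternion ℝ)) : Set (Quaternion ℝ) :=
  {q | ∃ x : ι → Quaternion ℝ, (∑ i, ‖x i‖ ^ 2) = 1 ∧
    q = ∑ i, ∑ j, star (x i) * A i j * x j}

/-!
Let `A` have the block rows `(0, q)` and `(0, 1)` for a row vector `q`. At a unit vector `(a, y)`
its quadratic form equals `a⋆(∑ qᵢ yᵢ) + d` with `d = ∑ |yᵢ|²` and `|a|² = 1 - d`, so by
Cauchy–Schwarz it lies in the disk around `d`. Conversely, the disks shrink to a point at `d = 0`,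
so by the intermediate value theorem a point of one of them lies on the boundary sphere of some
disk, where it is reached by a vector `y` realising equality in Cauchy–Schwarz.
-/

open Metric Set

open scoped Quaternion

theorem iUnion_closedBall_eq_iUnion_sphere {X α : Type*} [PseudoMetricSpace X]
    [TopologicalSpace α] {s : Set α} (hs : IsPreconnected s) {c : α → X} {r : α → ℝ}
    (hc : ContinuousOn c s) (hr : ContinuousOn r s) {a : α} (ha : a ∈ s) (hra : r a ≤ 0) :
    ⋃ t ∈ s, closedBall (c t) (r t) = ⋃ t ∈ s, sphere (c t) (r t) := by
  refine Subset.antisymm (iUnion₂_subset fun t ht p hp ↦ ?_)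
    (iUnion₂_mono fun _ _ ↦ sphere_subset_closedBall)
  obtain ⟨t', ht', hpt'⟩ := hs.intermediate_value₂ (f := fun t ↦ dist p (c t)) ht ha
    (by fun_prop) hr hp (hra.trans dist_nonneg)
  exact mem_iUnion₂.2 ⟨t', ht', hpt'⟩

theorem norm_sum_mul_sq_le {ι R : Type*} [NonUnitalSeminormedRing R] (s : Finset ι)
    (q x : ι → R) :
    ‖∑ i ∈ s, q i * x i‖ ^ 2 ≤ (∑ i ∈ s, ‖q i‖ ^ 2) * ∑ i ∈ s, ‖x i‖ ^ 2 :=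
  calc ‖∑ i ∈ s, q i * x i‖ ^ 2
      ≤ (∑ i ∈ s, ‖q i‖ * ‖x i‖) ^ 2 := by
        gcongr
        exact norm_sum_le_of_le s fun i _ ↦ norm_mul_le (q i) (x i)
    _ ≤ _ := Finset.sum_mul_sq_le_sq_mul_sq s _ _

theorem exists_norm_eq_one_norm_smul_eq {E : Type*} [NormedAddCommGroup E] [NormedSpace ℝ E]
    [Nontrivial E] (w : E) : ∃ u : E, ‖u‖ = 1 ∧ ‖w‖ • u = w := by
  rcases eq_or_ne w 0 with rfl | hw
  · obtain ⟨u, hu⟩ := exists_norm_eq E zero_le_one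
    exact ⟨u, hu, by rw [norm_zero, zero_smul]⟩
  · exact ⟨‖w‖⁻¹ • w, norm_smul_inv_norm hw, smul_inv_smul₀ (norm_ne_zero_iff.2 hw) w⟩

theorem qnr_submatrix_equiv {ι κ : Type*} [Fintype ι] [Fintype κ] (A : Matrix ι ι ℍ)
    (e : κ ≃ ι) : qnr (A.submatrix e e) = qnr A := by
  ext p
  refine (e.arrowCongr (Equiv.refl ℍ)).exists_congr fun x ↦ ?_
  simp [← e.sum_comp]

theorem sum_star_mul_self {ι : Type*} (s : Finset ι) (y : ι → ℍ) :
    ∑ i ∈ s, star (y i) * y i = (∑ i ∈ s, ‖y i‖ ^ 2 : ℝ) := by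
  simp_rw [Quaternion.star_mul_self, Quaternion.normSq_eq_norm_mul_self, ← sq]
  exact (map_sum (algebraMap ℝ ℍ) _ _).symm

theorem exists_sum_mul_eq_sqrt_sum_norm_sq {ι : Type*} [Fintype ι] [Nonempty ι] (q : ι → ℍ) :
    ∃ e : ι → ℍ, ∑ i, ‖e i‖ ^ 2 = 1 ∧ ∑ i, q i * e i = (√(∑ i, ‖q i‖ ^ 2) : ℝ) := by
  classical
  have hk : 0 ≤ ∑ i, ‖q i‖ ^ 2 := by positivity
  set k := ∑ i, ‖q i‖ ^ 2 with hk_def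
  rcases hk.eq_or_lt with hk0 | hk_pos
  · obtain ⟨i₀⟩ := ‹Nonempty ι›
    have hq : ∀ i, q i = 0 := by
      simpa [hk_def, Finset.sum_eq_zero_iff_of_nonneg] using hk0.symm
    exact ⟨Pi.single i₀ 1, by simp [Pi.single_apply, apply_ite], by simp [hq, ← hk0]⟩
  · refine ⟨fun i ↦ star (q i) * ((√k)⁻¹ : ℝ), ?_, ?_⟩
    · simp_rw [norm_mul, norm_star, mul_pow, ← Finset.sum_mul, ← hk_def, Quaternion.norm_coe,
        Real.norm_eq_abs, sq_abs, inv_pow, Real.sq_sqrt hk]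
      exact mul_inv_cancel₀ hk_pos.ne'
    · calc ∑ i, q i * (star (q i) * ((√k)⁻¹ : ℝ))
          = (∑ i, q i * star (q i)) * ((√k)⁻¹ : ℝ) := by simp_rw [Finset.sum_mul, mul_assoc]
        _ = (k : ℍ) * ((√k)⁻¹ : ℝ) := by
          congr 1
          simpa using sum_star_mul_self .univ fun i ↦ star (q i)
        _ = (√k : ℝ) := by rw [← Quaternion.coe_mul, ← div_eq_mul_inv, Real.div_sqrt]

section

variable {ι : Type*} [Fintype ι] [DecidableEq ι] (q : ι → ℍ)

theorem mem_qnr_fromBlocks_iff {p : ℍ} :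
    p ∈ qnr (Matrix.fromBlocks 0 (Matrix.replicateRow (Fin 1) q) 0 1) ↔
      ∃ (a : ℍ) (y : ι → ℍ), ‖a‖ ^ 2 + ∑ i, ‖y i‖ ^ 2 = 1 ∧
        p = star a * ∑ i, q i * y i + (∑ i, ‖y i‖ ^ 2 : ℝ) := by
  rw [qnr, mem_ofPred_eq, (Equiv.sumArrowEquivProdArrow (Fin 1) ι ℍ).exists_congr_left,
    Prod.exists, (Equiv.funUnique (Fin 1) ℍ).exists_congr_left]
  refine exists₂_congr fun a y ↦ ?_
  simp [Equiv.sumArrowEquivProdArrow, Matrix.one_apply, mul_assoc, Finset.mul_sum,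
    ← sum_star_mul_self]

theorem qnr_fromBlocks_subset_iUnion_closedBall :
    qnr (Matrix.fromBlocks 0 (Matrix.replicateRow (Fin 1) q) 0 1) ⊆
      ⋃ d ∈ Icc (0 : ℝ) 1, closedBall (d : ℍ) √((∑ i, ‖q i‖ ^ 2) * d * (1 - d)) := by
  intro p hp
  obtain ⟨a, y, hay, rfl⟩ := (mem_qnr_fromBlocks_iff q).1 hp
  have ha : 1 - ∑ i, ‖y i‖ ^ 2 = ‖a‖ ^ 2 := by linarith
  have hy : ∑ i, ‖y i‖ ^ 2 ≤ 1 := by linarith [sq_nonneg ‖a‖]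
  refine mem_iUnion₂.2 ⟨∑ i, ‖y i‖ ^ 2, ⟨by positivity, hy⟩, ?_⟩
  rw [mem_closedBall, dist_eq_norm, add_sub_cancel_right, ha]
  refine Real.le_sqrt_of_sq_le ?_
  calc ‖star a * ∑ i, q i * y i‖ ^ 2
      = ‖∑ i, q i * y i‖ ^ 2 * ‖a‖ ^ 2 := by rw [norm_mul, norm_star, mul_pow, mul_comm]
    _ ≤ (∑ i, ‖q i‖ ^ 2) * (∑ i, ‖y i‖ ^ 2) * ‖a‖ ^ 2 := by
      gcongr
      exact norm_sum_mul_sq_le _ q y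

theorem sphere_subset_qnr_fromBlocks [Nonempty ι] {d : ℝ} (hd : d ∈ Icc 0 1) :
    sphere (d : ℍ) √((∑ i, ‖q i‖ ^ 2) * d * (1 - d)) ⊆
      qnr (Matrix.fromBlocks 0 (Matrix.replicateRow (Fin 1) q) 0 1) := by
  intro p hp
  have hd' : 0 ≤ 1 - d := sub_nonneg.2 hd.2
  obtain ⟨e, he, hqe⟩ := exists_sum_mul_eq_sqrt_sum_norm_sq q
  obtain ⟨u, hu, hpu⟩ := exists_norm_eq_one_norm_smul_eq (p - d)
  set k := ∑ i, ‖q i‖ ^ 2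
  have hk : 0 ≤ k := by positivity
  have hy : ∑ i, ‖e i * (√d • u)‖ ^ 2 = d := by
    simp_rw [norm_mul, mul_pow, ← Finset.sum_mul, he, norm_smul, hu, mul_one, one_mul,
      Real.norm_eq_abs, sq_abs, Real.sq_sqrt hd.1]
  refine (mem_qnr_fromBlocks_iff q).2 ⟨(√(1 - d) : ℝ), fun i ↦ e i * (√d • u), ?_, ?_⟩
  · rw [hy, Quaternion.norm_coe, Real.norm_eq_abs, sq_abs, Real.sq_sqrt hd', sub_add_cancel]
  · rw [hy, ← sub_eq_iff_eq_add]
    calc p - d = √(k * d * (1 - d)) • u := by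
          rw [← mem_sphere_iff_norm.1 hp, hpu]
      _ = √(1 - d) • √k • √d • u := by
          rw [Real.sqrt_mul (mul_nonneg hk hd.1), Real.sqrt_mul hk, smul_smul, smul_smul]
          congr 1
          ring
      _ = star ((√(1 - d) : ℝ) : ℍ) * ∑ i, q i * (e i * (√d • u)) := by
          simp_rw [← mul_assoc, ← Finset.sum_mul, hqe, Quaternion.star_coe,
            Quaternion.coe_mul_eq_smul]

theorem qnr_example_union_disks_general [Nonempty ι] :
    qnr (Matrix.fromBlocks 0 (Matrix.replicateRow (Fin 1) q) 0 1) =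
      ⋃ d ∈ Icc (0 : ℝ) 1, closedBall (d : ℍ) √((∑ i, ‖q i‖ ^ 2) * d * (1 - d)) := by
  refine (qnr_fromBlocks_subset_iUnion_closedBall q).antisymm ?_
  rw [iUnion_closedBall_eq_iUnion_sphere isPreconnected_Icc
    Quaternion.continuous_coe.continuousOn (by fun_prop) (left_mem_Icc.2 zero_le_one) (by simp)]
  exact iUnion₂_subset fun d hd ↦ sphere_subset_qnr_fromBlocks q hd

end

theorem fromBlocks_replicateRow_vecTwo_submatrix {R : Type*} [Zero R] [One R] (a b : R) :
    (Matrix.fromBlocks 0 (Matrix.replicateRow (Fin 1) ![a, b]) 0 1).submatrix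
        (finSumFinEquiv (m := 1) (n := 2)).symm finSumFinEquiv.symm =
      !![0, a, b; 0, 1, 0; 0, 0, 1] := by
  refine Matrix.ext fun i j ↦ ?_
  fin_cases i <;> fin_cases j <;> rfl

/-- For nonzero `q₁₂, q₁₃ ∈ ℍ` and `k = |q₁₂|² + |q₁₃|²`, the matrix `Ã` with
rows `(0, q₁₂, q₁₃)`, `(0, 1, 0)`, `(0, 0, 1)` satisfies
`W(Ã) = ⋃_{d ∈ [0,1]} 𝔻_ℍ(d, √(k d(1−d)))`. -/
theorem qnr_example_union_disks (q12 q13 : Quaternion ℝ) (h12 : q12 ≠ 0) (h13 : q13 ≠ 0) :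
    qnr !![0, q12, q13; 0, 1, 0; 0, 0, 1] =
      ⋃ d ∈ Set.Icc (0 : ℝ) 1,
        Metric.closedBall ((d : ℝ) : Quaternion ℝ)
          (Real.sqrt ((‖q12‖ ^ 2 + ‖q13‖ ^ 2) * d * (1 - d))) := by
  rw [← fromBlocks_replicateRow_vecTwo_submatrix, qnr_submatrix_equiv,
    qnr_example_union_disks_general]
  simp only [Fin.sum_univ_two, Matrix.cons_val_zero, Matrix.cons_val_one]
end
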